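/- arXiv:2404.05355 — 2 statements merged into one kernel-verified Lean document; each statement's English description precedes it below -/
import Mathlib

section
/- Let A ∈ ℝ^{n×n} and let T ∈ ℝ^{n×n} be invertible with T^{−1} A T = blockdiag(A_s, A_u), where every eigenvalue of A_s over ℂ has negative real part and every eigenvalue of A_u over ℂ has positive real part. Define G(t) = T · blockdiag(e^{A_s t}, 0) · T^{−1} for t ≥ 0 and G(t) = T · blockdiag(0, −e^{A_u t}) · T^{−1} for t < 0. Then for every continuous bounded g : ℝ → ℝⁿ, the improper integral y(t) = ∫_{−∞}^{∞} G(t−τ) g(τ) dτ converges for all t, the function y is a bounded solution of ẏ = A y + g(t) on ℝ, and it is the unique solution bounded on ℝ. -/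
open MeasureTheory

/-- The Green's function `G(t)`: `T ⬝ blockdiag(e^{A_s t}, 0) ⬝ T⁻¹` for `t ≥ 0` and
`T ⬝ blockdiag(0, −e^{A_u t}) ⬝ T⁻¹` for `t < 0`. -/
noncomputable def greenFun {m k : ℕ} (T : Matrix (Fin m ⊕ Fin k) (Fin m ⊕ Fin k) ℝ)
    (As : Matrix (Fin m) (Fin m) ℝ) (Au : Matrix (Fin k) (Fin k) ℝ) (t : ℝ) :
    Matrix (Fin m ⊕ Fin k) (Fin m ⊕ Fin k) ℝ :=
  if 0 ≤ t then T * Matrix.fromBlocks (NormedSpace.exp (t • As)) 0 0 0 * T⁻¹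
  else T * Matrix.fromBlocks 0 0 0 (-(NormedSpace.exp (t • Au))) * T⁻¹

/-!
By the spectral mapping inclusion `σ(exp a) ⊆ exp σ(a)` and the spectral radius formula, `exp (t a)`
decays exponentially whenever `σ(a)` lies in the open left half-plane. Applied to `A_s` and `-A_u`,
this is an exponential dichotomy of `A`, and the Green's function is integrable. Multiplying the
Green integral by `exp (-t A)` turns it into an integral over `(-∞, t]` of the stable part minus one
over `(t, ∞)` of the unstable part, whose derivative is `exp (-t A) g(t)`. A bounded solution `z` of
`ż = A z` vanishes: its stable part at time `t` is `exp (s A)` applied to the stable part at time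
`t - s`, hence tends to zero as `s → ∞`, and reversing time treats the unstable part.
-/

open Filter Set Topology
open NormedSpace (exp)

/-- Exponential decay as `t → ∞`, with a bound on all of `[0, ∞)` rather than only eventually. -/
def ExpDecays {F : Type*} [Norm F] (f : ℝ → F) : Prop :=
  ∃ K ω : ℝ, 0 < ω ∧ ∀ t, 0 ≤ t → ‖f t‖ ≤ K * Real.exp (-ω * t)

namespace ExpDecays

variable {F : Type*} [NormedAddCommGroup F] {f : ℝ → F}

lemma tendsto_zero (hf : ExpDecays f) : Tendsto f atTop (𝓝 0) := by
  obtain ⟨K, ω, hω, hK⟩ := hf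
  have hexp : Tendsto (fun t => Real.exp (-ω * t)) atTop (𝓝 0) :=
    Real.tendsto_exp_atBot.comp (tendsto_id.const_mul_atTop_of_neg (neg_lt_zero.mpr hω))
  exact squeeze_zero_norm' (eventually_ge_atTop 0 |>.mono hK) (by simpa using hexp.const_mul K)

lemma integrableOn_Ici (hf : ExpDecays f) (hc : Continuous f) : IntegrableOn f (Ici 0) := by
  obtain ⟨K, ω, hω, hK⟩ := hf
  have hexp : IntegrableOn (fun t => K * Real.exp (-ω * t)) (Ici 0) := by
    rw [integrableOn_Ici_iff_integrableOn_Ioi]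
    exact (integrableOn_exp_mul_Ioi (neg_lt_zero.mpr hω) 0).const_mul K
  refine hexp.mono' hc.aestronglyMeasurable ?_
  exact (ae_restrict_iff' measurableSet_Ici).mpr (.of_forall hK)

lemma clm_comp {F' : Type*} [NormedSpace ℝ F] [NormedAddCommGroup F'] [NormedSpace ℝ F']
    (L : F →L[ℝ] F') (hf : ExpDecays f) :
    ExpDecays fun t => L (f t) := by
  obtain ⟨K, ω, hω, hK⟩ := hf
  refine ⟨‖L‖ * K, ω, hω, fun t ht => (L.le_opNorm _).trans ?_⟩
  rw [mul_assoc]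
  gcongr
  exact hK t ht

end ExpDecays

section OneParameterGroup

variable {𝔸 : Type*} [NormedRing 𝔸] [NormedAlgebra ℝ 𝔸] [CompleteSpace 𝔸]

lemma continuous_exp_smul (a : 𝔸) : Continuous fun t : ℝ => exp (t • a) :=
  continuous_iff_continuousAt.mpr fun t => (hasDerivAt_exp_smul_const a t).continuousAt

lemma exp_add_smul (a : 𝔸) (s t : ℝ) : exp ((s + t) • a) = exp (s • a) * exp (t • a) := by
  let _ := NormedAlgebra.restrictScalars ℚ ℝ 𝔸
  rw [add_smul, NormedSpace.exp_add_of_commute]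
  exact ((Commute.refl a).smul_left s).smul_right t

lemma exp_natCast_smul (a : 𝔸) (n : ℕ) : exp ((n : ℝ) • a) = exp a ^ n := by
  let _ := NormedAlgebra.restrictScalars ℚ ℝ 𝔸
  rw [Nat.cast_smul_eq_nsmul, NormedSpace.exp_nsmul]

lemma exp_smul_mul_exp_smul_neg (a : 𝔸) (t : ℝ) : exp (t • a) * exp (t • -a) = 1 := by
  rw [smul_neg, ← neg_smul, ← exp_add_smul, add_neg_cancel, zero_smul, NormedSpace.exp_zero]

lemma exp_smul_neg_mul_exp_smul (a : 𝔸) (t : ℝ) : exp (t • -a) * exp (t • a) = 1 := by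
  simpa only [neg_neg] using exp_smul_mul_exp_smul_neg (-a) t

lemma exp_smul_neg_mul_exp_sub_smul (a : 𝔸) (s t : ℝ) :
    exp (s • -a) * exp ((s - t) • a) = exp (t • -a) := by
  rw [sub_eq_add_neg, exp_add_smul, ← mul_assoc, exp_smul_neg_mul_exp_smul, one_mul, neg_smul,
    smul_neg]

end OneParameterGroup

section SpectralDecay

variable {𝔸 : Type*} [NormedRing 𝔸] [NormedAlgebra ℂ 𝔸] [CompleteSpace 𝔸]

theorem spectrum_exp_subset (a : 𝔸) : spectrum ℂ (exp a) ⊆ Complex.exp '' spectrum ℂ a := by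
  -- Characters of the bicommutant `S` of `a` commute with `exp`, and `S` is closed under inverses,
  -- so that the spectrum of `a` is the same in `S` as in `𝔸`.
  let S := Subalgebra.centralizer ℂ (Set.centralizer {a})
  have hcomm (x y : S) : x * y = y * x := Subtype.ext <|
    Set.centralizer_centralizer_comm_of_comm (S := {a}) (by simp) x x.2 y y.2
  let _ : NormedCommRing S := { (inferInstance : NormedRing S) with mul_comm := hcomm }
  have : CompleteSpace S := (Set.isClosed_centralizer _).completeSpace_coe
  let _ := NormedAlgebra.restrictScalars ℚ ℂ S
  let _ := NormedAlgebra.restrictScalars ℚ ℂ 𝔸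
  let b : S := ⟨a, Set.subset_centralizer_centralizer rfl⟩
  have hb : spectrum ℂ b ⊆ spectrum ℂ a := by
    refine fun z hz hunit => hz ?_
    obtain ⟨u, hu⟩ := hunit
    have hinv : (↑u⁻¹ : 𝔸) ∈ S := fun c hc =>
      Commute.units_inv_right (hu ▸ (algebraMap ℂ S z - b).2 c hc)
    exact ⟨⟨algebraMap ℂ S z - b, ⟨_, hinv⟩, Subtype.ext (by simp [b, ← hu]),
      Subtype.ext (by simp [b, ← hu])⟩, rfl⟩
  intro z hz
  have hexp : ((exp b : S) : 𝔸) = exp a := NormedSpace.map_exp S.val continuous_subtype_val b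
  obtain ⟨χ, rfl⟩ := WeakDual.CharacterSpace.mem_spectrum_iff_exists.mp
    (spectrum.subset_subalgebra (exp b) (hexp ▸ hz))
  refine ⟨χ b, hb (AlgHom.apply_mem_spectrum χ b), ?_⟩
  rw [Complex.exp_eq_exp_ℂ]
  exact (NormedSpace.map_exp χ (map_continuous χ) b).symm

lemma bddAbove_norm_pow_of_spectralRadius_lt_one {a : 𝔸} (ha : spectralRadius ℂ a < 1) :
    BddAbove (range fun n : ℕ => ‖a ^ n‖) := by
  refine IsBoundedUnder.bddAbove_range ⟨1, ?_⟩
  have hroot :=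
    (spectrum.pow_nnnorm_pow_one_div_tendsto_nhds_spectralRadius a).eventually_lt_const ha
  rw [eventually_map]
  filter_upwards [hroot, eventually_gt_atTop 0] with n hn hpos
  by_contra! h
  exact hn.not_ge (ENNReal.one_le_rpow (by exact_mod_cast h.le) (by positivity))

lemma exists_norm_exp_smul_le_of_spectrum_re_neg {a : 𝔸} (ha : ∀ μ ∈ spectrum ℂ a, μ.re < 0) :
    ∃ K, ∀ t : ℝ, 0 ≤ t → ‖exp (t • a)‖ ≤ K := by
  have hradius : spectralRadius ℂ (exp a) < 1 := by
    rcases (spectrum ℂ (exp a)).eq_empty_or_nonempty with hempty | hne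
    · simp [spectralRadius, hempty]
    · refine spectrum.spectralRadius_lt_of_forall_lt_of_nonempty (r := 1) hne fun z hz => ?_
      obtain ⟨μ, hμ, rfl⟩ := spectrum_exp_subset a hz
      rw [← NNReal.coe_lt_coe, coe_nnnorm, Complex.norm_exp]
      simpa using ha μ hμ
  obtain ⟨C, hC⟩ := bddAbove_norm_pow_of_spectralRadius_lt_one hradius
  obtain ⟨D, hD⟩ := (isCompact_Icc (a := (0 : ℝ)) (b := 1)).exists_bound_of_continuousOn
    (continuous_exp_smul a).continuousOn
  refine ⟨D * C, fun t ht => ?_⟩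
  have hsplit : exp (t • a) = exp ((t - ⌊t⌋₊) • a) * exp a ^ ⌊t⌋₊ := by
    rw [← exp_natCast_smul, ← exp_add_smul, sub_add_cancel]
  have hfract : t - ⌊t⌋₊ ∈ Icc (0 : ℝ) 1 :=
    ⟨sub_nonneg.mpr (Nat.floor_le ht), by linarith [Nat.lt_floor_add_one t]⟩
  rw [hsplit]
  exact (norm_mul_le _ _).trans <| mul_le_mul (hD _ hfract) (hC ⟨_, rfl⟩) (norm_nonneg _)
    ((norm_nonneg _).trans (hD _ hfract))

theorem expDecays_exp_smul_of_spectrum_re_neg {a : 𝔸} (ha : ∀ μ ∈ spectrum ℂ a, μ.re < 0) :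
    ExpDecays fun t => exp (t • a) := by
  let _ := NormedAlgebra.restrictScalars ℚ ℂ 𝔸
  obtain ⟨δ, hδ, hgap⟩ := (spectrum.isCompact (𝕜 := ℂ) a).exists_forall_le'
    (f := fun μ => -μ.re) (by fun_prop) (a := 0) (by simpa using ha)
  set ω := δ / 2 with hω
  -- Shifting `a` by a fraction of the spectral gap leaves the spectrum in the left half-plane.
  obtain ⟨K, hK⟩ := exists_norm_exp_smul_le_of_spectrum_re_neg
    (a := algebraMap ℂ 𝔸 ω + a) <| by
      rw [← spectrum.singleton_add_eq]
      rintro _ ⟨_, rfl, μ, hμ, rfl⟩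
      rw [Complex.add_re, Complex.ofReal_re]
      linarith [hgap μ hμ]
  refine ⟨K, ω, by positivity, fun t ht => ?_⟩
  have hshift : exp (t • a) = (Real.exp (-ω * t) : ℂ) • exp (t • (algebraMap ℂ 𝔸 ω + a)) := by
    have hsum : t • a = algebraMap ℂ 𝔸 ↑(-ω * t) + t • (algebraMap ℂ 𝔸 ω + a) := by
      have hcancel : algebraMap ℂ 𝔸 ↑(-ω * t) + t • algebraMap ℂ 𝔸 ω = 0 := by
        rw [Algebra.algebraMap_eq_smul_one, Algebra.algebraMap_eq_smul_one, ← Complex.coe_smul,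
          smul_smul, ← add_smul, ← Complex.ofReal_mul, ← Complex.ofReal_add]
        ring_nf
        simp
      rw [smul_add, ← add_assoc, hcancel, zero_add]
    rw [hsum, NormedSpace.exp_add_of_commute (Algebra.commutes _ _),
      ← NormedSpace.algebraMap_exp_comm, ← Algebra.smul_def, ← Complex.exp_eq_exp_ℂ,
      Complex.ofReal_exp]
  beta_reduce
  rw [hshift, norm_smul, Complex.norm_real, Real.norm_of_nonneg (Real.exp_pos _).le, mul_comm]
  gcongr
  exact hK t ht

end SpectralDecay

section HalfLineIntegral

variable {E : Type*} [NormedAddCommGroup E] {f : ℝ → E} {t : ℝ}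

lemma integrableOn_Iic_of_continuous (hf : Continuous f) (hi : IntegrableOn f (Iic t)) (s : ℝ) :
    IntegrableOn f (Iic s) :=
  (hi.union (hf.integrableOn_Icc (a := t) (b := s))).mono_set Iic_subset_Iic_union_Icc

variable [NormedSpace ℝ E] [CompleteSpace E]

lemma hasDerivAt_integral_Iic (hf : Continuous f) (hi : IntegrableOn f (Iic t)) :
    HasDerivAt (fun s => ∫ τ in Iic s, f τ) (f t) t := by
  have hsplit (s : ℝ) : ∫ τ in Iic s, f τ = (∫ τ in Iic t, f τ) + ∫ τ in t..s, f τ := by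
    rw [← intervalIntegral.integral_Iic_sub_Iic hi (integrableOn_Iic_of_continuous hf hi s),
      add_sub_cancel]
  rw [funext hsplit]
  exact (hf.integral_hasStrictDerivAt t t).hasDerivAt.const_add _

lemma hasDerivAt_integral_Ioi (hf : Continuous f) (hi : IntegrableOn f (Ioi t)) :
    HasDerivAt (fun s => ∫ τ in Ioi s, f τ) (-f t) t := by
  have hreflect (s : ℝ) : ∫ τ in Ioi s, f τ = ∫ τ in Iic (-s), f (-τ) := by
    rw [integral_comp_neg_Iic, neg_neg]
  have hi_neg : IntegrableOn (fun τ => f (-τ)) (Iic (-t)) :=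
    .comp_neg_Iic (by rwa [neg_neg, integrableOn_Ici_iff_integrableOn_Ioi])
  rw [funext hreflect]
  simpa [Function.comp_def] using
    (hasDerivAt_integral_Iic (hf.comp continuous_neg) hi_neg).scomp t (hasDerivAt_neg t)

end HalfLineIntegral

section Dichotomy

variable {E : Type*} [NormedAddCommGroup E] [NormedSpace ℝ E] {B P : E →L[ℝ] E}

/-- An exponential dichotomy of `ẏ = B y` on `ℝ`: `P` is the projection onto the stable subspace
along the unstable one. Idempotency of `P` follows, because
`P * (1 - P) = (exp (t • B) * P) * (exp (t • -B) * (1 - P))` tends to zero as `t → ∞`. -/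
structure HasExpDichotomy (B P : E →L[ℝ] E) : Prop where
  commute : Commute B P
  decay_stable : ExpDecays fun t => exp (t • B) * P
  decay_unstable : ExpDecays fun t => exp (t • -B) * (1 - P)

lemma HasExpDichotomy.neg (h : HasExpDichotomy B P) : HasExpDichotomy (-B) (1 - P) where
  commute := (Commute.one_right _).sub_right h.commute.neg_left
  decay_stable := h.decay_unstable
  decay_unstable := by simpa only [neg_neg, sub_sub_cancel] using h.decay_stable

/-- The Green's function of a dichotomy: the fundamental solution of `d/dt - B` that decays in
both time directions. -/
noncomputable def greenKernel (B P : E →L[ℝ] E) (t : ℝ) : E →L[ℝ] E :=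
  if 0 ≤ t then exp (t • B) * P else -(exp (t • B) * (1 - P))

variable [CompleteSpace E]

lemma hasDerivAt_exp_smul_apply (B : E →L[ℝ] E) {w : ℝ → E} {w' : E} {t : ℝ}
    (hw : HasDerivAt w w' t) :
    HasDerivAt (fun s => exp (s • B) (w s)) (B (exp (t • B) (w t)) + exp (t • B) w') t :=
  (hasDerivAt_exp_smul_const' B t).clm_apply hw

lemma hasDerivAt_exp_smul_neg_apply_iff (B : E →L[ℝ] E) {y : ℝ → E} {v : E} {t : ℝ} :
    HasDerivAt (fun s => exp (s • -B) (y s)) (exp (t • -B) v) t ↔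
      HasDerivAt y (B (y t) + v) t := by
  have hcancel (s : ℝ) (x : E) : exp (s • B) (exp (s • -B) x) = x :=
    congr($(exp_smul_mul_exp_smul_neg B s) x)
  constructor <;> intro h
  · simpa only [hcancel] using hasDerivAt_exp_smul_apply B h
  · have hcomm : Commute (exp (t • -B)) B :=
      (((Commute.refl B).neg_left).smul_left t).exp_left
    convert hasDerivAt_exp_smul_apply (-B) h using 1
    have : exp (t • -B) (B (y t)) = B (exp (t • -B) (y t)) := congr($(hcomm.eq) (y t))
    simp only [neg_apply, map_add, this]
    abel

lemma exp_smul_apply_of_hasDerivAt {z : ℝ → E} (hz : ∀ t, HasDerivAt z (B (z t)) t) (s t : ℝ) :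
    exp (t • B) (z s) = z (s + t) := by
  have hconst (r : ℝ) : HasDerivAt (fun s => exp (s • -B) (z s)) 0 r := by
    simpa using (hasDerivAt_exp_smul_neg_apply_iff B (v := 0)).mpr (by simpa using hz r)
  have heq : exp ((s + t) • -B) (z (s + t)) = exp (s • -B) (z s) :=
    is_const_of_deriv_eq_zero (fun r => (hconst r).differentiableAt) (fun r => (hconst r).deriv) _ _
  calc exp (t • B) (z s)
      = exp (t • B) ((exp (s • B) * exp (s • -B)) (z s)) := by
        rw [exp_smul_mul_exp_smul_neg B, one_apply_eq_self]
    _ = exp ((s + t) • B) (exp (s • -B) (z s)) := by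
        rw [add_comm, exp_add_smul B]
        rfl
    _ = (exp ((s + t) • B) * exp ((s + t) • -B)) (z (s + t)) := by
        rw [← heq, mul_apply_eq_comp]
    _ = z (s + t) := by rw [exp_smul_mul_exp_smul_neg B, one_apply_eq_self]

lemma apply_eq_zero_of_bounded_solution (hBP : Commute B P)
    (hdecay : ExpDecays fun t => exp (t • B) * P) {z : ℝ → E}
    (hz : ∀ t, HasDerivAt z (B (z t)) t) {C : ℝ} (hC : ∀ t, ‖z t‖ ≤ C) (t : ℝ) : P (z t) = 0 := by
  have hback (s : ℝ) : P (z t) = (exp (s • B) * P) (z (t - s)) := by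
    rw [((hBP.smul_left s).exp_left).eq, mul_apply_eq_comp,
      exp_smul_apply_of_hasDerivAt hz, sub_add_cancel]
  have hlim : Tendsto (fun s : ℝ => ‖exp (s • B) * P‖ * C) atTop (𝓝 0) := by
    simpa using hdecay.tendsto_zero.norm.mul_const C
  refine norm_le_zero_iff.mp (ge_of_tendsto' hlim fun s => ?_)
  rw [hback s]
  exact ContinuousLinearMap.le_opNorm_of_le _ (hC _)

lemma exp_smul_neg_mul_greenKernel_of_le {t τ : ℝ} (h : τ ≤ t) :
    exp (t • -B) * greenKernel B P (t - τ) = exp (τ • -B) * P := by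
  rw [greenKernel, if_pos (sub_nonneg.mpr h), ← mul_assoc, exp_smul_neg_mul_exp_sub_smul]

lemma exp_smul_neg_mul_greenKernel_of_lt {t τ : ℝ} (h : t < τ) :
    exp (t • -B) * greenKernel B P (t - τ) = -(exp (τ • -B) * (1 - P)) := by
  rw [greenKernel, if_neg (sub_neg.mpr h).not_ge, mul_neg, ← mul_assoc,
    exp_smul_neg_mul_exp_sub_smul]

namespace HasExpDichotomy

variable {g : ℝ → E}

lemma eq_zero_of_bounded_solution (h : HasExpDichotomy B P) {z : ℝ → E}
    (hz : ∀ t, HasDerivAt z (B (z t)) t) {C : ℝ} (hC : ∀ t, ‖z t‖ ≤ C) (t : ℝ) : z t = 0 := by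
  have hstable : P (z t) = 0 :=
    apply_eq_zero_of_bounded_solution h.commute h.decay_stable hz hC t
  have hz_rev (s : ℝ) : HasDerivAt (fun s => z (-s)) ((-B) (z (-s))) s := by
    simpa [Function.comp_def] using (hz (-s)).scomp s (hasDerivAt_neg s)
  have hunstable : (1 - P) (z t) = 0 := by
    simpa using apply_eq_zero_of_bounded_solution h.neg.commute h.neg.decay_stable hz_rev
      (fun s => hC (-s)) (-t)
  simpa [hstable] using hunstable

lemma integrable_greenKernel (h : HasExpDichotomy B P) : Integrable (greenKernel B P) := by
  have hstable : IntegrableOn (greenKernel B P) (Ici 0) := by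
    refine IntegrableOn.congr_fun ?_ (fun t ht => (if_pos ht).symm) measurableSet_Ici
    exact h.decay_stable.integrableOn_Ici ((continuous_exp_smul B).mul continuous_const)
  have hunstable : IntegrableOn (greenKernel B P) (Iio 0) := by
    refine IntegrableOn.congr_fun ?_ (fun t ht => (if_neg (not_le.mpr ht)).symm) measurableSet_Iio
    have hint := h.decay_unstable.integrableOn_Ici
      ((continuous_exp_smul (-B)).mul continuous_const)
    rw [← neg_zero] at hint
    simpa only [neg_smul_neg, Pi.neg_def] using
      (hint.comp_neg_Iic.mono_set Iio_subset_Iic_self).neg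
  rw [← integrableOn_univ, ← Iio_union_Ici (a := (0 : ℝ))]
  exact hunstable.union hstable

lemma integrable_greenKernel_apply (h : HasExpDichotomy B P) (hg : Continuous g) {C : ℝ}
    (hC : ∀ t, ‖g t‖ ≤ C) (t : ℝ) : Integrable fun τ => greenKernel B P (t - τ) (g τ) := by
  have hG := h.integrable_greenKernel.comp_sub_left t
  refine (hG.norm.mul_const C).mono'
    ((ContinuousLinearMap.id ℝ (E →L[ℝ] E)).aestronglyMeasurable_comp₂ hG.aestronglyMeasurable
      hg.aestronglyMeasurable) (.of_forall fun τ => ?_)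
  exact ContinuousLinearMap.le_opNorm_of_le _ (hC τ)

lemma norm_integral_greenKernel_apply_le (h : HasExpDichotomy B P) {C : ℝ}
    (hC : ∀ t, ‖g t‖ ≤ C) (t : ℝ) :
    ‖∫ τ, greenKernel B P (t - τ) (g τ)‖ ≤ (∫ τ, ‖greenKernel B P τ‖) * C := by
  rw [← integral_sub_left_eq_self (fun τ => ‖greenKernel B P τ‖) volume t, ← integral_mul_const]
  exact norm_integral_le_of_norm_le ((h.integrable_greenKernel.comp_sub_left t).norm.mul_const C)
    (.of_forall fun τ => ContinuousLinearMap.le_opNorm_of_le _ (hC τ))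

lemma hasDerivAt_integral_greenKernel (h : HasExpDichotomy B P) (hg : Continuous g) {C : ℝ}
    (hC : ∀ t, ‖g t‖ ≤ C) (t : ℝ) :
    HasDerivAt (fun s => ∫ τ, greenKernel B P (s - τ) (g τ))
      (B (∫ τ, greenKernel B P (t - τ) (g τ)) + g t) t := by
  have hint := h.integrable_greenKernel_apply hg hC
  have hint_exp (s : ℝ) : Integrable fun τ => exp (s • -B) (greenKernel B P (s - τ) (g τ)) :=
    (exp (s • -B)).integrable_comp (hint s)
  let f (τ : ℝ) : E := (exp (τ • -B) * P) (g τ)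
  let k (τ : ℝ) : E := (exp (τ • -B) * (1 - P)) (g τ)
  have hf : Continuous f := ((continuous_exp_smul (-B)).mul continuous_const).clm_apply hg
  have hk : Continuous k := ((continuous_exp_smul (-B)).mul continuous_const).clm_apply hg
  have hf_eq (s : ℝ) : EqOn f (fun τ => exp (s • -B) (greenKernel B P (s - τ) (g τ))) (Iic s) :=
    fun τ hτ => congr($(exp_smul_neg_mul_greenKernel_of_le hτ) (g τ)).symm
  have hk_eq (s : ℝ) :
      EqOn (fun τ => -k τ) (fun τ => exp (s • -B) (greenKernel B P (s - τ) (g τ))) (Ioi s) :=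
    fun τ hτ => congr($(exp_smul_neg_mul_greenKernel_of_lt hτ) (g τ)).symm
  have hpull (s : ℝ) : exp (s • -B) (∫ τ, greenKernel B P (s - τ) (g τ)) =
      (∫ τ in Iic s, f τ) - ∫ τ in Ioi s, k τ := by
    rw [← (exp (s • -B)).integral_comp_comm (hint s),
      ← intervalIntegral.integral_Iic_add_Ioi (hint_exp s).integrableOn (hint_exp s).integrableOn,
      ← setIntegral_congr_fun measurableSet_Iic (hf_eq s),
      ← setIntegral_congr_fun measurableSet_Ioi (hk_eq s), integral_neg, sub_eq_add_neg]
  have hf_int : IntegrableOn f (Iic t) :=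
    (hint_exp t).integrableOn.congr_fun (hf_eq t).symm measurableSet_Iic
  have hk_int : IntegrableOn k (Ioi t) := by
    simpa using ((hint_exp t).integrableOn.congr_fun (hk_eq t).symm measurableSet_Ioi).neg
  rw [← hasDerivAt_exp_smul_neg_apply_iff, funext hpull]
  convert (hasDerivAt_integral_Iic hf hf_int).fun_sub (hasDerivAt_integral_Ioi hk hk_int) using 1
  rw [sub_neg_eq_add, ← add_apply, ← mul_add, add_sub_cancel, mul_one]

end HasExpDichotomy

theorem stmt_2_general (h : HasExpDichotomy B P) {g : ℝ → E} (hgc : Continuous g)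
    (hgb : ∃ C : ℝ, ∀ t : ℝ, ‖g t‖ ≤ C) :
    (∀ t : ℝ, Integrable fun τ => greenKernel B P (t - τ) (g τ)) ∧
    (∃ C : ℝ, ∀ t : ℝ, ‖∫ τ, greenKernel B P (t - τ) (g τ)‖ ≤ C) ∧
    (∀ t : ℝ, HasDerivAt (fun s => ∫ τ, greenKernel B P (s - τ) (g τ))
      (B (∫ τ, greenKernel B P (t - τ) (g τ)) + g t) t) ∧
    (∀ y : ℝ → E, (∀ t : ℝ, HasDerivAt y (B (y t) + g t) t) →
      (∃ C : ℝ, ∀ t : ℝ, ‖y t‖ ≤ C) → ∀ t : ℝ, y t = ∫ τ, greenKernel B P (t - τ) (g τ)) := by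
  obtain ⟨C, hC⟩ := hgb
  have hbound := h.norm_integral_greenKernel_apply_le hC
  have hsol := h.hasDerivAt_integral_greenKernel hgc hC
  refine ⟨h.integrable_greenKernel_apply hgc hC, ⟨_, hbound⟩, hsol, ?_⟩
  rintro y hy ⟨D, hD⟩ t
  refine sub_eq_zero.mp (h.eq_zero_of_bounded_solution (fun s => ?_)
    (fun s => (norm_sub_le _ _).trans (add_le_add (hD s) (hbound s))) t)
  simpa only [map_sub, add_sub_add_right_eq_sub] using (hy s).fun_sub (hsol s)

end Dichotomy

section BlockDiagonal

lemma one_sub_map_one_zero {R S T F : Type*} [Ring R] [Ring S] [Ring T] [FunLike F (R × S) T]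
    [RingHomClass F (R × S) T] (f : F) : 1 - f (1, 0) = f (0, 1) := by
  rw [← map_one f, ← map_sub, Prod.one_eq_mk, Prod.mk_sub_mk, sub_self, sub_zero]

variable {𝔸 𝔹 : Type*} [NormedRing 𝔸] [NormedAlgebra ℝ 𝔸] [CompleteSpace 𝔸]
  [NormedRing 𝔹] [NormedAlgebra ℝ 𝔹] [CompleteSpace 𝔹]

lemma exp_smul_map_prodMk {𝔻 : Type*} [NormedRing 𝔻] [NormedAlgebra ℝ 𝔻] {φ : 𝔸 × 𝔹 →ₐ[ℝ] 𝔻}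
    (hφ : Continuous φ) (a : 𝔸) (b : 𝔹) (t : ℝ) :
    exp (t • φ (a, b)) = φ (exp (t • a), exp (t • b)) := by
  let _ := NormedAlgebra.restrictScalars ℚ ℝ 𝔸
  let _ := NormedAlgebra.restrictScalars ℚ ℝ 𝔹
  let _ := NormedAlgebra.restrictScalars ℚ ℝ 𝔻
  rw [← map_smul, ← NormedSpace.map_exp φ hφ, Prod.smul_mk]
  exact congrArg φ (Prod.ext (Prod.fst_exp _) (Prod.snd_exp _))

variable {E : Type*} [NormedAddCommGroup E] [NormedSpace ℝ E]
  {φ : 𝔸 × 𝔹 →ₐ[ℝ] (E →L[ℝ] E)} {a : 𝔸} {b : 𝔹}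

lemma greenKernel_map_prodMk (hφ : Continuous φ) (a : 𝔸) (b : 𝔹) (t : ℝ) :
    greenKernel (φ (a, b)) (φ (1, 0)) t =
      if 0 ≤ t then φ (exp (t • a), 0) else φ (0, -exp (t • b)) := by
  rw [greenKernel, one_sub_map_one_zero, exp_smul_map_prodMk hφ, ← map_mul, ← map_mul, ← map_neg]
  simp

lemma hasExpDichotomy_map_prodMk (hφ : Continuous φ) (ha : ExpDecays fun t : ℝ => exp (t • a))
    (hb : ExpDecays fun t : ℝ => exp (t • -b)) : HasExpDichotomy (φ (a, b)) (φ (1, 0)) where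
  commute := by
    rw [Commute, SemiconjBy, ← map_mul, ← map_mul]
    simp
  decay_stable := by
    convert! ha.clm_comp ((⟨φ.toLinearMap, hφ⟩ : 𝔸 × 𝔹 →L[ℝ] _) ∘L .inl ℝ 𝔸 𝔹) with t
    rw [exp_smul_map_prodMk hφ, ← map_mul]
    simp only [Prod.mk_mul_mk, mul_one, mul_zero]
    rfl
  decay_unstable := by
    convert! hb.clm_comp ((⟨φ.toLinearMap, hφ⟩ : 𝔸 × 𝔹 →L[ℝ] _) ∘L .inr ℝ 𝔸 𝔹) with t
    rw [one_sub_map_one_zero, ← map_neg, Prod.neg_mk, exp_smul_map_prodMk hφ, ← map_mul]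
    simp only [Prod.mk_mul_mk, mul_one, mul_zero]
    rfl

end BlockDiagonal

section Matrices

variable {m n R : Type*} [Fintype m] [DecidableEq m] [Fintype n] [DecidableEq n] [CommRing R]

/-- The map `(X, Y) ↦ T ⬝ blockdiag(X, Y) ⬝ T⁻¹`, packaged as an algebra homomorphism so that it
transports exponentials and the stable projection `(1, 0)`. -/
noncomputable def blockConj (T : Matrix (m ⊕ n) (m ⊕ n) R) (hT : IsUnit T.det) :
    Matrix m m R × Matrix n n R →ₐ[R] Matrix (m ⊕ n) (m ⊕ n) R :=
  AlgHom.ofLinearMap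
    { toFun := fun X => T * Matrix.fromBlocks X.1 0 0 X.2 * T⁻¹
      map_add' := fun X Y => by
        rw [← add_mul, ← mul_add, Matrix.fromBlocks_add]
        simp only [Prod.fst_add, Prod.snd_add, add_zero]
      map_smul' := fun c X => by
        rw [RingHom.id_apply, ← smul_mul_assoc, ← mul_smul_comm, Matrix.fromBlocks_smul]
        simp only [Prod.smul_fst, Prod.smul_snd, smul_zero] }
    (by simp [Matrix.mul_nonsing_inv T hT])
    (fun X Y => by
      have hblocks : Matrix.fromBlocks X.1 0 0 X.2 * Matrix.fromBlocks Y.1 0 0 Y.2 =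
          Matrix.fromBlocks (X * Y).1 0 0 (X * Y).2 := by
        simp [Matrix.fromBlocks_multiply]
      simp only [LinearMap.coe_mk, AddHom.coe_mk, ← hblocks, mul_assoc,
        Matrix.nonsing_inv_mul_cancel_left _ _ hT])

open scoped Matrix.Norms.Operator

lemma expDecays_exp_smul_of_spectrum_map_ofReal_re_neg {M : Matrix n n ℝ}
    (hM : ∀ μ ∈ spectrum ℂ (M.map Complex.ofReal), μ.re < 0) :
    ExpDecays fun t : ℝ => exp (t • M) := by
  obtain ⟨K, ω, hω, hK⟩ := expDecays_exp_smul_of_spectrum_re_neg hM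
  refine ⟨K, ω, hω, fun t ht => ?_⟩
  have hmap : exp (t • M.map Complex.ofReal) = (exp (t • M)).map Complex.ofReal := by
    rw [show t • M.map Complex.ofReal = Complex.ofRealHom.mapMatrix (t • M) by ext; simp]
    exact (NormedSpace.map_exp (Complex.ofRealHom.mapMatrix (m := n))
      (continuous_id.matrix_map Complex.continuous_ofReal) (t • M)).symm
  have hnorm : ‖exp (t • M)‖ = ‖exp (t • M.map Complex.ofReal)‖ := by
    simp [hmap, Matrix.linfty_opNorm_def]
  exact hnorm ▸ hK t ht

lemma spectrum_neg_map_ofReal_re_neg {M : Matrix n n ℝ}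
    (hM : ∀ μ ∈ spectrum ℂ (M.map Complex.ofReal), 0 < μ.re) :
    ∀ μ ∈ spectrum ℂ ((-M).map Complex.ofReal), μ.re < 0 := by
  intro μ hμ
  rw [show (-M).map Complex.ofReal = -M.map Complex.ofReal by ext; simp, ← spectrum.neg_eq,
    Set.mem_neg] at hμ
  simpa using hM _ hμ

/-- `blockConj T hT` with values viewed as bounded operators on Euclidean space. -/
noncomputable def euclideanBlockConj (T : Matrix (m ⊕ n) (m ⊕ n) ℝ) (hT : IsUnit T.det) :
    Matrix m m ℝ × Matrix n n ℝ →ₐ[ℝ]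
      (EuclideanSpace ℝ (m ⊕ n) →L[ℝ] EuclideanSpace ℝ (m ⊕ n)) :=
  (Matrix.toEuclideanCLM (n := m ⊕ n) (𝕜 := ℝ)).toAlgEquiv.toAlgHom.comp (blockConj T hT)

lemma continuous_euclideanBlockConj (T : Matrix (m ⊕ n) (m ⊕ n) ℝ) (hT : IsUnit T.det) :
    Continuous (euclideanBlockConj T hT) :=
  (euclideanBlockConj T hT).toLinearMap.continuous_of_finiteDimensional

lemma hasExpDichotomy_euclideanBlockConj {T : Matrix (m ⊕ n) (m ⊕ n) ℝ} (hT : IsUnit T.det)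
    {X : Matrix m m ℝ} {Y : Matrix n n ℝ}
    (hX : ∀ μ ∈ spectrum ℂ (X.map Complex.ofReal), μ.re < 0)
    (hY : ∀ μ ∈ spectrum ℂ (Y.map Complex.ofReal), 0 < μ.re) :
    HasExpDichotomy (euclideanBlockConj T hT (X, Y)) (euclideanBlockConj T hT (1, 0)) :=
  hasExpDichotomy_map_prodMk (continuous_euclideanBlockConj T hT)
    (expDecays_exp_smul_of_spectrum_map_ofReal_re_neg hX)
    (expDecays_exp_smul_of_spectrum_map_ofReal_re_neg (spectrum_neg_map_ofReal_re_neg hY))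

lemma toEuclideanLin_eq_euclideanBlockConj {T : Matrix (m ⊕ n) (m ⊕ n) ℝ} (hT : IsUnit T.det)
    {A : Matrix (m ⊕ n) (m ⊕ n) ℝ} {X : Matrix m m ℝ} {Y : Matrix n n ℝ}
    (hA : T⁻¹ * A * T = Matrix.fromBlocks X 0 0 Y) (v : EuclideanSpace ℝ (m ⊕ n)) :
    Matrix.toEuclideanLin A v = euclideanBlockConj T hT (X, Y) v := by
  have hconj : A = T * Matrix.fromBlocks X 0 0 Y * T⁻¹ := by
    rw [← hA, ← mul_assoc, Matrix.mul_nonsing_inv_cancel_right _ _ hT,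
      Matrix.mul_nonsing_inv_cancel_left _ _ hT]
  rw [hconj]
  rfl

lemma toEuclideanLin_greenFun {m k : ℕ} {T : Matrix (Fin m ⊕ Fin k) (Fin m ⊕ Fin k) ℝ}
    (hT : IsUnit T.det) (X : Matrix (Fin m) (Fin m) ℝ) (Y : Matrix (Fin k) (Fin k) ℝ) (t : ℝ)
    (v : EuclideanSpace ℝ (Fin m ⊕ Fin k)) :
    Matrix.toEuclideanLin (greenFun T X Y t) v =
      greenKernel (euclideanBlockConj T hT (X, Y)) (euclideanBlockConj T hT (1, 0)) t v := by
  rw [greenKernel_map_prodMk (continuous_euclideanBlockConj T hT), greenFun]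
  split_ifs <;> rfl

end Matrices

/-- let `T⁻¹ A T = blockdiag(A_s, A_u)` with `A_s` having all eigenvalues of
negative real part and `A_u` all eigenvalues of positive real part, and let `G` be the
associated Green's function.  Then for every continuous bounded `g`, the improper integral
`y(t) = ∫_{-∞}^{∞} G(t−τ) g(τ) dτ` converges for all `t`, is bounded, solves
`ẏ = A y + g(t)` on `ℝ`, and is the unique solution bounded on `ℝ`. -/
theorem stmt_2 {m k : ℕ} (A T : Matrix (Fin m ⊕ Fin k) (Fin m ⊕ Fin k) ℝ)
    (As : Matrix (Fin m) (Fin m) ℝ) (Au : Matrix (Fin k) (Fin k) ℝ)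
    (hT : IsUnit T.det)
    (hblock : T⁻¹ * A * T = Matrix.fromBlocks As 0 0 Au)
    (hAs : ∀ μ ∈ spectrum ℂ (As.map Complex.ofReal), μ.re < 0)
    (hAu : ∀ μ ∈ spectrum ℂ (Au.map Complex.ofReal), 0 < μ.re)
    (g : ℝ → EuclideanSpace ℝ (Fin m ⊕ Fin k))
    (hgc : Continuous g) (hgb : ∃ C : ℝ, ∀ t : ℝ, ‖g t‖ ≤ C) :
    (∀ t : ℝ, Integrable (fun τ => Matrix.toEuclideanLin (greenFun T As Au (t - τ)) (g τ))) ∧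
    (∃ C : ℝ, ∀ t : ℝ,
      ‖∫ τ : ℝ, Matrix.toEuclideanLin (greenFun T As Au (t - τ)) (g τ)‖ ≤ C) ∧
    (∀ t : ℝ, HasDerivAt
      (fun s => ∫ τ : ℝ, Matrix.toEuclideanLin (greenFun T As Au (s - τ)) (g τ))
      (Matrix.toEuclideanLin A (∫ τ : ℝ, Matrix.toEuclideanLin (greenFun T As Au (t - τ)) (g τ))
        + g t) t) ∧
    (∀ y : ℝ → EuclideanSpace ℝ (Fin m ⊕ Fin k),
      (∀ t : ℝ, HasDerivAt y (Matrix.toEuclideanLin A (y t) + g t) t) →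
      (∃ C : ℝ, ∀ t : ℝ, ‖y t‖ ≤ C) →
      ∀ t : ℝ, y t = ∫ τ : ℝ, Matrix.toEuclideanLin (greenFun T As Au (t - τ)) (g τ)) := by
  simpa only [toEuclideanLin_greenFun hT, toEuclideanLin_eq_euclideanBlockConj hT hblock] using
    stmt_2_general (hasExpDichotomy_euclideanBlockConj hT hAs hAu) hgc hgb
end

section
/- Let A ∈ ℝ^{n×n}, let E ⊆ ℝⁿ be a linear subspace with A E ⊆ E, and suppose there is κ > 0 such that every eigenvalue λ (over ℂ) of the restriction of A to E satisfies Re λ < −κ. Then there exists a constant K ≥ 1 such that ‖e^{At} x‖ ≤ K e^{−κt} ‖x‖ for all x ∈ E and all t ≥ 0. -/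
/-- The action of the matrix exponential `e^{tA}` on a vector of `EuclideanSpace ℝ (Fin n)`. -/
noncomputable def expAct {n : ℕ} (A : Matrix (Fin n) (Fin n) ℝ) (t : ℝ)
    (v : EuclideanSpace ℝ (Fin n)) : EuclideanSpace ℝ (Fin n) :=
  Matrix.toEuclideanLin (NormedSpace.exp (t • A)) v

/-!
The spectrum of `exp a` in a complex Banach algebra is the image under `Complex.exp` of the
spectrum of `a`: the bicommutant of `a` is a commutative Banach algebra computing both spectra, and
there the spectrum of an element is the set of its values at the characters. Hence, if the spectrum
of `a` lies in `Re z < ω`, the spectral radius of `exp a` is less than `e ^ ω`, so Gelfand's formula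
bounds `‖exp a ^ n‖` by a multiple of `e ^ (ω n)`; compactness of `[0, 1]` extends the bound to all
times `t ≥ 0`. A real operator on a finite-dimensional space is embedded, through its
complexification, into a complex matrix algebra, which changes norms by bounded factors only.
-/

open Filter Set
open NormedSpace (exp)
open scoped TensorProduct

section SpectralMapping

theorem isUnit_coe_centralizer_iff {R A : Type*} [CommSemiring R] [Semiring A] [Algebra R A]
    {s : Set A} {x : Subalgebra.centralizer R s} : IsUnit (x : A) ↔ IsUnit x := by
  refine ⟨fun ⟨u, hu⟩ ↦ ?_, fun h ↦ h.map (Subalgebra.centralizer R s).val⟩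
  have hu_inv : (↑u⁻¹ : A) ∈ Subalgebra.centralizer R s := fun y hy ↦
    Commute.units_inv_right (hu ▸ x.2 y hy)
  exact isUnit_iff_exists.mpr ⟨⟨_, hu_inv⟩, Subtype.ext (by simp [← hu]),
    Subtype.ext (by simp [← hu])⟩

theorem spectrum_coe_centralizer {R A : Type*} [CommRing R] [Ring A] [Algebra R A] {s : Set A}
    (x : Subalgebra.centralizer R s) : spectrum R (x : A) = spectrum R x := by
  ext r
  rw [spectrum.mem_iff, spectrum.mem_iff, ← isUnit_coe_centralizer_iff]
  rfl

theorem spectrum_exp_subset_of_normedCommRing {A : Type*} [NormedCommRing A] [NormedAlgebra ℂ A]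
    [CompleteSpace A] (a : A) : spectrum ℂ (exp a) ⊆ Complex.exp '' spectrum ℂ a := by
  let +nondep : NormedAlgebra ℚ A := .restrictScalars ℚ ℂ A
  intro z hz
  obtain ⟨χ, rfl⟩ := WeakDual.CharacterSpace.mem_spectrum_iff_exists.mp hz
  refine ⟨χ a, WeakDual.CharacterSpace.mem_spectrum_iff_exists.mpr ⟨χ, rfl⟩, ?_⟩
  rw [NormedSpace.map_exp χ (map_continuous χ), Complex.exp_eq_exp_ℂ]

variable {A : Type*} [NormedRing A] [NormedAlgebra ℂ A] [CompleteSpace A]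

theorem spectrum_exp (a : A) : spectrum ℂ (exp a) = Complex.exp '' spectrum ℂ a := by
  refine Subset.antisymm ?_ ?_
  · let +nondep : NormedAlgebra ℚ A := .restrictScalars ℚ ℂ A
    -- The bicommutant of `a` is commutative, and being a centralizer it is closed under inverses.
    let S := Subalgebra.centralizer ℂ (({a} : Set A).centralizer)
    have hS_comm (x y : S) : x * y = y * x := Subtype.ext <|
      centralizer_centralizer_comm_of_comm (by simp) _ x.2 _ y.2
    have hS_closed : IsClosed (S : Set A) := isClosed_centralizer _
    let _ : NormedCommRing S := { (inferInstance : NormedRing S) with mul_comm := hS_comm }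
    have : CompleteSpace S := hS_closed.completeSpace_coe
    let +nondep : NormedAlgebra ℚ S := .restrictScalars ℚ ℂ S
    let a' : S := ⟨a, subset_centralizer_centralizer rfl⟩
    have hexp : ((exp a' : S) : A) = exp a :=
      NormedSpace.map_exp S.val continuous_subtype_val a'
    have ha : spectrum ℂ a = spectrum ℂ a' := spectrum_coe_centralizer a'
    rw [← hexp, spectrum_coe_centralizer, ha]
    exact spectrum_exp_subset_of_normedCommRing a'
  · rintro _ ⟨z, hz, rfl⟩
    rw [Complex.exp_eq_exp_ℂ]
    exact spectrum.exp_mem_exp a hz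

theorem spectralRadius_exp_lt [Nontrivial A] {a : A} {ω : ℝ} (ha : ∀ z ∈ spectrum ℂ a, z.re < ω) :
    spectralRadius ℂ (exp a) < ENNReal.ofReal (Real.exp ω) := by
  refine spectrum.spectralRadius_lt_of_forall_lt _ fun w hw ↦ ?_
  rw [spectrum_exp] at hw
  obtain ⟨z, hz, rfl⟩ := hw
  rw [Real.lt_toNNReal_iff_coe_lt, coe_nnnorm, Complex.norm_exp]
  exact Real.exp_lt_exp.mpr (ha z hz)

end SpectralMapping

section Growth

theorem exists_norm_pow_le_of_spectralRadius_lt {A : Type*} [NormedRing A] [NormedAlgebra ℂ A]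
    [CompleteSpace A] {a : A} {r : ℝ} (hr : spectralRadius ℂ a < ENNReal.ofReal r) :
    ∃ C, ∀ n : ℕ, ‖a ^ n‖ ≤ C * r ^ n := by
  have hr_pos : 0 < r := ENNReal.ofReal_pos.mp (bot_le.trans_lt hr)
  have h_eventually : ∀ᶠ n : ℕ in atTop, ‖a ^ n‖ ≤ ‖r ^ n‖ := by
    filter_upwards [(spectrum.gelfand_formula a).eventually_lt_const hr, eventually_gt_atTop 0]
      with n hn hn_pos
    have hn_pow : ‖a ^ n‖ₑ ≤ ENNReal.ofReal r ^ n := by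
      rw [one_div] at hn
      exact ((ENNReal.rpow_inv_lt_iff (by positivity)).mp hn).le.trans_eq (ENNReal.rpow_natCast _ _)
    rw [Real.norm_of_nonneg (by positivity)]
    rwa [← ENNReal.ofReal_pow hr_pos.le, ← ofReal_norm,
      ENNReal.ofReal_le_ofReal_iff (by positivity)] at hn_pow
  obtain ⟨C, -, hC⟩ := Asymptotics.bound_of_isBigO_nat_atTop (.of_bound' h_eventually)
  refine ⟨C, fun n ↦ ?_⟩
  simpa [abs_of_pos hr_pos] using hC (pow_ne_zero n hr_pos.ne')

theorem exists_norm_exp_smul_le_of_norm_exp_pow_le {A : Type*} [NormedRing A] [NormedAlgebra ℝ A]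
    [CompleteSpace A] {a : A} {C ω : ℝ} (hC : ∀ n : ℕ, ‖exp a ^ n‖ ≤ C * Real.exp ω ^ n) :
    ∃ K, ∀ t : ℝ, 0 ≤ t → ‖exp (t • a)‖ ≤ K * Real.exp (ω * t) := by
  let +nondep : NormedAlgebra ℚ A := .restrictScalars ℚ ℝ A
  have h_cont : Continuous fun s : ℝ ↦ Real.exp (-(ω * s)) • exp (s • a) :=
    (by fun_prop : Continuous fun s : ℝ ↦ Real.exp (-(ω * s))).smul
      (NormedSpace.exp_continuous.comp (by fun_prop))
  obtain ⟨M, hM⟩ := (isCompact_Icc (a := (0 : ℝ)) (b := 1)).exists_bound_of_continuousOn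
    h_cont.continuousOn
  have h_frac (s : ℝ) (hs : s ∈ Icc 0 1) : ‖exp (s • a)‖ ≤ M * Real.exp (ω * s) := by
    have h_bound := hM s hs
    rwa [norm_smul, Real.norm_of_nonneg (Real.exp_pos _).le, Real.exp_neg,
      inv_mul_le_iff₀ (Real.exp_pos _), mul_comm] at h_bound
  refine ⟨M * C, fun t ht ↦ ?_⟩
  set n := ⌊t⌋₊
  obtain ⟨s, hs⟩ : ∃ s, t = s + n := ⟨t - n, by ring⟩
  have hs_mem : s ∈ Icc (0 : ℝ) 1 :=
    ⟨by linarith [Nat.floor_le ht], by linarith [Nat.lt_floor_add_one t]⟩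
  have h_split : exp (t • a) = exp (s • a) * exp a ^ n := by
    rw [← NormedSpace.exp_nsmul, ← NormedSpace.exp_add_of_commute
      (((Commute.refl a).smul_left s).smul_right n), ← Nat.cast_smul_eq_nsmul ℝ, ← add_smul, hs]
  calc ‖exp (t • a)‖
      ≤ ‖exp (s • a)‖ * ‖exp a ^ n‖ := h_split ▸ norm_mul_le _ _
    _ ≤ (M * Real.exp (ω * s)) * (C * Real.exp ω ^ n) := by
        gcongr
        · exact (norm_nonneg _).trans (h_frac s hs_mem)
        · exact h_frac s hs_mem
        · exact hC n
    _ = M * C * Real.exp (ω * t) := by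
        rw [← Real.exp_nat_mul, mul_mul_mul_comm, ← Real.exp_add, hs]
        congr 2; ring

theorem exists_norm_exp_smul_le {A : Type*} [NormedRing A] [NormedAlgebra ℂ A] [CompleteSpace A]
    {a : A} {ω : ℝ} (ha : ∀ z ∈ spectrum ℂ a, z.re < ω) :
    ∃ C, ∀ t : ℝ, 0 ≤ t → ‖exp (t • a)‖ ≤ C * Real.exp (ω * t) := by
  cases subsingleton_or_nontrivial A
  · exact ⟨0, fun t _ ↦ by simp [Subsingleton.elim (exp (t • a)) 0]⟩
  obtain ⟨C, hC⟩ := exists_norm_pow_le_of_spectralRadius_lt (spectralRadius_exp_lt ha)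
  exact exists_norm_exp_smul_le_of_norm_exp_pow_le hC

theorem exists_norm_exp_smul_le_of_injective {A B : Type*} [NormedRing A] [NormedAlgebra ℝ A]
    [FiniteDimensional ℝ A] [NormedRing B] [NormedAlgebra ℂ B] [CompleteSpace B]
    {φ : A →ₐ[ℝ] B} (hφ : Function.Injective φ) {a : A} {ω : ℝ}
    (ha : ∀ z ∈ spectrum ℂ (φ a), z.re < ω) :
    ∃ C, ∀ t : ℝ, 0 ≤ t → ‖exp (t • a)‖ ≤ C * Real.exp (ω * t) := by
  let +nondep : NormedAlgebra ℚ A := .restrictScalars ℚ ℝ A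
  let +nondep : NormedAlgebra ℚ B := .restrictScalars ℚ ℝ B
  have : CompleteSpace A := FiniteDimensional.complete ℝ A
  obtain ⟨C, hC⟩ := exists_norm_exp_smul_le ha
  obtain ⟨K, -, hK⟩ := (LinearMap.injective_iff_antilipschitz φ.toLinearMap).mp hφ
  refine ⟨K * C, fun t ht ↦ ?_⟩
  have hφ_exp : φ (exp (t • a)) = exp (t • φ a) := by
    rw [NormedSpace.map_exp φ φ.toLinearMap.continuous_of_finiteDimensional, map_smul]
  calc ‖exp (t • a)‖ ≤ K * ‖φ (exp (t • a))‖ :=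
        ZeroHomClass.bound_of_antilipschitz φ.toLinearMap hK _
    _ ≤ K * (C * Real.exp (ω * t)) := by rw [hφ_exp]; gcongr; exact hC t ht
    _ = K * C * Real.exp (ω * t) := (mul_assoc ..).symm

end Growth

open scoped Matrix.Norms.Operator in
theorem exists_norm_exp_smul_le_of_spectrum_baseChange {E : Type*} [NormedAddCommGroup E]
    [NormedSpace ℝ E] [FiniteDimensional ℝ E] (T : E →L[ℝ] E) {ω : ℝ}
    (hT : ∀ z ∈ spectrum ℂ (LinearMap.baseChange ℂ (T : E →ₗ[ℝ] E)), z.re < ω) :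
    ∃ C, ∀ t : ℝ, 0 ≤ t → ‖exp (t • T)‖ ≤ C * Real.exp (ω * t) := by
  let b := (Module.finBasis ℝ E).baseChange ℂ
  let e : Module.End ℂ (ℂ ⊗[ℝ] E) ≃ₐ[ℂ] Matrix _ _ ℂ := LinearMap.toMatrixAlgEquiv b
  let φ : (E →L[ℝ] E) →ₐ[ℝ] Matrix _ _ ℂ :=
    (e.toAlgHom.restrictScalars ℝ).comp ((Module.End.baseChangeHom ℝ ℂ E).comp
      (Module.End.toContinuousLinearMap (𝕜 := ℝ) E).symm.toAlgHom)
  have hφ : Function.Injective φ := e.injective.comp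
    ((LinearMap.baseChangeHom_injective ℝ E ℂ).comp (AlgEquiv.injective _))
  have hφ_spectrum : spectrum ℂ (φ T) = spectrum ℂ (LinearMap.baseChange ℂ (T : E →ₗ[ℝ] E)) :=
    AlgEquiv.spectrum_eq e _
  exact exists_norm_exp_smul_le_of_injective hφ (hφ_spectrum ▸ hT)

theorem comp_exp_eq_exp_comp {𝕜 E F : Type*} [RCLike 𝕜] [NormedAddCommGroup E]
    [NormedSpace 𝕜 E] [CompleteSpace E] [NormedAddCommGroup F] [NormedSpace 𝕜 F] [CompleteSpace F]
    {f : E →L[𝕜] F} {S : E →L[𝕜] E} {T : F →L[𝕜] F} (h : f ∘L S = T ∘L f) :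
    f ∘L exp S = exp T ∘L f := by
  have h_pow (n : ℕ) : f ∘L (S ^ n) = (T ^ n) ∘L f := by
    have h_semiconj : Function.Semiconj f S T := DFunLike.congr_fun h
    ext x
    simpa only [ContinuousLinearMap.comp_apply, FunLike.coe_pow_eq_iterate] using
      h_semiconj.iterate_right n x
  have hS := (NormedSpace.exp_series_hasSum_exp' (𝕂 := 𝕜) S).mapL (.compL 𝕜 E E F f)
  have hT := (NormedSpace.exp_series_hasSum_exp' (𝕂 := 𝕜) T).mapL
    ((ContinuousLinearMap.compL 𝕜 E F F).flip f)
  simp only [map_smul, ContinuousLinearMap.compL_apply, ContinuousLinearMap.flip_apply,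
    h_pow] at hS hT
  exact hS.unique hT

theorem exists_norm_exp_smul_apply_le_of_comp_eq {E F : Type*} [NormedAddCommGroup E]
    [NormedSpace ℝ E] [FiniteDimensional ℝ E] [NormedAddCommGroup F] [NormedSpace ℝ F]
    [CompleteSpace F] {f : E →L[ℝ] F} {S : E →L[ℝ] E} {T : F →L[ℝ] F} (h : f ∘L S = T ∘L f) {ω : ℝ}
    (hS : ∀ z ∈ spectrum ℂ (LinearMap.baseChange ℂ (S : E →ₗ[ℝ] E)), z.re < ω) :
    ∃ C, ∀ x, ∀ t : ℝ, 0 ≤ t → ‖exp (t • T) (f x)‖ ≤ C * Real.exp (ω * t) * ‖x‖ := by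
  have : CompleteSpace E := FiniteDimensional.complete ℝ E
  obtain ⟨C, hC⟩ := exists_norm_exp_smul_le_of_spectrum_baseChange S hS
  refine ⟨‖f‖ * C, fun x t ht ↦ ?_⟩
  have h_smul : f ∘L (t • S) = (t • T) ∘L f := by
    rw [ContinuousLinearMap.comp_smul, h, ContinuousLinearMap.smul_comp]
  calc ‖exp (t • T) (f x)‖ = ‖f (exp (t • S) x)‖ :=
        congrArg norm (DFunLike.congr_fun (comp_exp_eq_exp_comp h_smul) x).symm
    _ ≤ ‖f‖ * ‖exp (t • S) x‖ := f.le_opNorm _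
    _ ≤ ‖f‖ * (C * Real.exp (ω * t) * ‖x‖) := by
        gcongr
        exact (exp (t • S)).le_of_opNorm_le (hC t ht) x
    _ = ‖f‖ * C * Real.exp (ω * t) * ‖x‖ := by ring

theorem toEuclideanCLM_exp {𝕜 n : Type*} [RCLike 𝕜] [Fintype n] [DecidableEq n]
    (A : Matrix n n 𝕜) :
    Matrix.toEuclideanCLM (𝕜 := 𝕜) (exp A) = exp (Matrix.toEuclideanCLM (𝕜 := 𝕜) A) := by
  open scoped Matrix.Norms.Operator in
  let +nondep : NormedAlgebra ℚ (Matrix n n 𝕜) := .restrictScalars ℚ 𝕜 _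
  let φ := (Matrix.toEuclideanCLM (n := n) (𝕜 := 𝕜)).toAlgEquiv
  exact NormedSpace.map_exp φ φ.toLinearMap.continuous_of_finiteDimensional A

theorem expAct_eq_exp_toEuclideanCLM {n : ℕ} (A : Matrix (Fin n) (Fin n) ℝ) (t : ℝ)
    (v : EuclideanSpace ℝ (Fin n)) :
    expAct A t v = exp (t • Matrix.toEuclideanCLM (𝕜 := ℝ) A) v := by
  rw [← map_smul, ← toEuclideanCLM_exp]
  rfl

theorem stmt_4_general {V : Type*} [NormedAddCommGroup V] [NormedSpace ℝ V] [CompleteSpace V]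
    (T : V →L[ℝ] V) (E : Submodule ℝ V) [FiniteDimensional ℝ E] (hInv : ∀ x ∈ E, T x ∈ E) (κ : ℝ)
    (hspec : ∀ μ ∈ spectrum ℂ
      (LinearMap.baseChange ℂ ((T : V →ₗ[ℝ] V).restrict hInv)), μ.re < -κ) :
    ∃ K : ℝ, 1 ≤ K ∧ ∀ x ∈ E, ∀ t : ℝ, 0 ≤ t →
      ‖exp (t • T) x‖ ≤ K * Real.exp (-κ * t) * ‖x‖ := by
  let S : E →L[ℝ] E := LinearMap.toContinuousLinearMap ((T : V →ₗ[ℝ] V).restrict hInv)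
  obtain ⟨C, hC⟩ := exists_norm_exp_smul_apply_le_of_comp_eq
    (rfl : E.subtypeL ∘L S = T ∘L E.subtypeL) hspec
  refine ⟨max 1 C, le_max_left _ _, fun x hx t ht ↦ (hC ⟨x, hx⟩ t ht).trans ?_⟩
  rw [Submodule.coe_norm]
  gcongr
  exact le_max_right _ _

/-- if `E ⊆ ℝⁿ` is an `A`-invariant subspace and every eigenvalue (over `ℂ`,
i.e. every element of the spectrum of the complexification of the induced map on `E`) of the
restriction of `A` to `E` satisfies `Re λ < −κ` with `κ > 0`, then there is a constant
`K ≥ 1` with `‖e^{At} x‖ ≤ K e^{−κt} ‖x‖` for all `x ∈ E` and `t ≥ 0`. -/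
theorem stmt_4 {n : ℕ} (A : Matrix (Fin n) (Fin n) ℝ)
    (E : Submodule ℝ (EuclideanSpace ℝ (Fin n)))
    (hInv : ∀ x ∈ E, Matrix.toEuclideanLin A x ∈ E)
    (κ : ℝ) (hκ : 0 < κ)
    (hspec : ∀ μ ∈ spectrum ℂ
      (LinearMap.baseChange ℂ ((Matrix.toEuclideanLin A).restrict hInv)), μ.re < -κ) :
    ∃ K : ℝ, 1 ≤ K ∧ ∀ x ∈ E, ∀ t : ℝ, 0 ≤ t →
      ‖expAct A t x‖ ≤ K * Real.exp (-κ * t) * ‖x‖ := by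
  simp only [expAct_eq_exp_toEuclideanCLM]
  exact stmt_4_general (Matrix.toEuclideanCLM (𝕜 := ℝ) A) E hInv κ hspec
end
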